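/- There exists a universal constant C ∈ (0,∞) with the following property. Fix n ∈ ℕ, an n-dimensional normed space (X,‖·‖_X), a Banach space (Y,‖·‖_Y), and L ∈ [1,∞). Let |·| be a Hilbertian norm on X, identifying X with ℝ^n. Suppose f:ℝ^n→Y satisfies ‖f‖_{Lip(B_X,Y)} ≤ 1 and ‖f‖_{Lip(X,Y)} ≤ L. Then for every x ∈ B_X and every t with 0 < t ≤ (1−‖x‖_X)² / (C·(M(X)√n + b(X)√(log L))²), the affine map Taylor¹_x(H_t f) satisfies ‖Taylor¹_x(H_t f)‖_{Lip(X,Y)} ≤ 2. -/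

import Mathlib

open MeasureTheory Metric Set ENNReal

noncomputable section

universe u

/-- `N` is a norm on the real vector space `V`. -/
def IsNorm {V : Type*} [AddCommGroup V] [Module ℝ V] (N : V → ℝ) : Prop :=
  (∀ x, N x = 0 → x = 0) ∧ (∀ (a : ℝ) (x : V), N (a • x) = |a| * N x) ∧
    (∀ x y : V, N (x + y) ≤ N x + N y)

/-- The average of `N` over the Euclidean unit sphere (the quantity `M(X)`). -/
def MX {n : ℕ} (N : EuclideanSpace ℝ (Fin n) → ℝ) : ℝ :=
  ⨍ σ : sphere (0 : EuclideanSpace ℝ (Fin n)) 1, N σ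
    ∂((volume : Measure (EuclideanSpace ℝ (Fin n))).toSphere)

/-- The quantity `b(X) = sup_{σ ∈ S^{n-1}} ‖σ‖_X`. -/
def bX {n : ℕ} (N : EuclideanSpace ℝ (Fin n) → ℝ) : ℝ :=
  sSup (N '' sphere (0 : EuclideanSpace ℝ (Fin n)) 1)

/-- The heat kernel `h_t(x) = (4πt)^{-n/2} e^{-|x|²/(4t)}` on `ℝⁿ`. -/
def heatKernel (n : ℕ) (t : ℝ) (x : EuclideanSpace ℝ (Fin n)) : ℝ :=
  (4 * Real.pi * t) ^ (-(n : ℝ) / 2) * Real.exp (-‖x‖ ^ 2 / (4 * t))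

/-- The heat evolute `H_t f = h_t ∗ f`. -/
def heat {n : ℕ} {Y : Type*} [NormedAddCommGroup Y] [NormedSpace ℝ Y]
    (t : ℝ) (f : EuclideanSpace ℝ (Fin n) → Y) (x : EuclideanSpace ℝ (Fin n)) : Y :=
  ∫ z, heatKernel n t z • f (x - z)

/-- The first-order Taylor polynomial `Taylor¹_x(g)(y) = g(x) + (y-x)·∇g(x)`. -/
def taylor1 {n : ℕ} {Y : Type*} [NormedAddCommGroup Y] [NormedSpace ℝ Y]
    (g : EuclideanSpace ℝ (Fin n) → Y) (x y : EuclideanSpace ℝ (Fin n)) : Y :=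
  g x + ∑ j, (y - x) j • fderiv ℝ g x (EuclideanSpace.single j 1)

open ProbabilityTheory

/-!
`H_t f (x)` is the average of `f (x - Z)` for a Gaussian vector `Z` with law `heatMeasure`, so a
bound on the derivative of `H_t f` at `x` follows from a bound on the averages of
`f (x + w - Z) - f (x - Z)` for small `w`. Such an increment is at most `‖w‖_X` when
`‖Z‖_X < (1 - ‖x‖_X) / 2`, because both points then lie in the unit ball, and at most `L ‖w‖_X`
otherwise. The averages are thus at most `2 ‖w‖_X` once `‖Z‖_X ≥ (1 - ‖x‖_X) / 2` has probability
at most `1 / L`.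

This tail bound is Gaussian concentration: `‖Z‖_X` has mean at most `M(X) √(2tn)`, by integration
in polar coordinates, and exceeds a fixed multiple of its mean by `ε` with probability at most
`exp (-c ε² / (t b(X)²))`. The latter is proved by comparing two independent copies of `Z` through
their rotation by `π / 4`, and by bounding the convex function `‖·‖_X` from below by its supporting
functionals, whose variances are at most `2t b(X)²`.
-/

section Seminorms

/-- A norm in the sense of `IsNorm`, as a bundled seminorm, which gives access to the seminorm
library; definiteness is forgotten. -/
def IsNorm.seminorm {V : Type*} [AddCommGroup V] [Module ℝ V] {N : V → ℝ} (hN : IsNorm N) :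
    Seminorm ℝ V :=
  Seminorm.of N hN.2.2 hN.2.1

lemma seminorm_continuous {E : Type*} [NormedAddCommGroup E] [NormedSpace ℝ E]
    [FiniteDimensional ℝ E] (p : Seminorm ℝ E) : Continuous p :=
  p.convexOn.locallyLipschitz.continuous

lemma exists_dual_eq_seminorm {E : Type*} [NormedAddCommGroup E] [NormedSpace ℝ E]
    {p : Seminorm ℝ E} (hp : Continuous p) (x : E) :
    ∃ φ : StrongDual ℝ E, φ x = p x ∧ ∀ y, |φ y| ≤ p y := by
  rcases eq_or_ne x 0 with rfl | hx
  · exact ⟨0, by simp, fun y ↦ by simp⟩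
  · obtain ⟨φ, hφ_eq, hφ_le⟩ := Module.Dual.exists_continuous_extension_of_le_seminorm_real _
      (LinearPMap.mkSpanSingleton (K := ℝ) x (p x) hx).toFun hp (by
        rintro ⟨y, hy⟩
        obtain ⟨c, rfl⟩ := Submodule.mem_span_singleton.1 hy
        calc LinearPMap.mkSpanSingleton x (p x) hx ⟨c • x, hy⟩
            = c * p x := LinearPMap.mkSpanSingleton'_apply _ _ _ c hy
          _ ≤ |c| * p x := mul_le_mul_of_nonneg_right (le_abs_self c) (apply_nonneg p x)
          _ = p (c • x) := (map_smul_eq_mul p c x).symm)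
    refine ⟨φ, ?_, hφ_le⟩
    rw [hφ_eq ⟨x, Submodule.mem_span_singleton_self x⟩, LinearPMap.toFun_eq_coe,
      LinearPMap.mkSpanSingleton_apply]

end Seminorms

section Cumulants

variable {Ω : Type*} [MeasurableSpace Ω] {μ : Measure Ω} [IsProbabilityMeasure μ] {X : Ω → ℝ}
  {l θ : ℝ}

lemma mul_integral_le_cgf (hX : Integrable X μ) (hexp : Integrable (fun ω ↦ Real.exp (l * X ω)) μ) :
    l * μ[X] ≤ cgf X μ l := by
  rw [cgf, Real.le_log_iff_exp_le (mgf_pos hexp), mgf, ← integral_const_mul]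
  exact convexOn_exp.map_integral_le Real.continuous_exp.continuousOn isClosed_univ
    (ae_of_all _ fun _ ↦ mem_univ _) (hX.const_mul l) hexp

lemma cgf_mul_le (hθ₀ : 0 ≤ θ) (hθ₁ : θ ≤ 1) (hexp : Integrable (fun ω ↦ Real.exp (l * X ω)) μ) :
    cgf X μ (θ * l) ≤ θ * cgf X μ l := by
  have hexp' : Integrable (fun ω ↦ Real.exp (θ * l * X ω)) μ := by
    have h := convex_integrableExpSet (X := X) (μ := μ)
      (show (0 : ℝ) ∈ integrableExpSet X μ by simp [integrableExpSet]) hexp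
      (sub_nonneg.2 hθ₁) hθ₀ (sub_add_cancel 1 θ)
    simpa [integrableExpSet] using h
  have hpow : (fun ω ↦ Real.exp (θ * l * X ω)) = fun ω ↦ Real.exp (l * X ω) ^ θ := by
    ext ω
    rw [← Real.exp_mul]
    ring_nf
  rw [cgf, cgf, ← Real.log_rpow (mgf_pos hexp)]
  refine Real.log_le_log (mgf_pos hexp') ?_
  rw [hpow] at hexp'
  rw [mgf, hpow]
  exact (Real.concaveOn_rpow hθ₀ hθ₁).le_map_integral
    (Real.continuous_rpow_const hθ₀).continuousOn isClosed_Ici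
    (ae_of_all _ fun ω ↦ (Real.exp_pos _).le) hexp hexp'

end Cumulants

section Concentration

lemma rotation_pi_div_four_fst {E : Type*} [NormedAddCommGroup E] [NormedSpace ℝ E] (z : E × E) :
    (ContinuousLinearMap.rotation (Real.pi / 4) z).1 = (√2 / 2) • (z.1 + z.2) := by
  rw [ContinuousLinearMap.rotation_apply, Real.cos_pi_div_four, Real.sin_pi_div_four, smul_add]

lemma smul_rotation_pi_div_four_fst_add_snd {E : Type*} [NormedAddCommGroup E] [NormedSpace ℝ E]
    (z : E × E) :
    (√2 / 2) • ((ContinuousLinearMap.rotation (Real.pi / 4) z).1 +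
      (ContinuousLinearMap.rotation (Real.pi / 4) z).2) = z.2 := by
  have h_sqrt : √2 / 2 * (√2 / 2 + √2 / 2) = (1 : ℝ) := by
    linear_combination Real.sq_sqrt (zero_le_two (α := ℝ)) / 2
  rw [ContinuousLinearMap.rotation_apply, Real.cos_pi_div_four, Real.sin_pi_div_four]
  calc (√2 / 2) • ((√2 / 2) • z.1 + (√2 / 2) • z.2 + (-(√2 / 2) • z.1 + (√2 / 2) • z.2))
      = (√2 / 2 * (√2 / 2 + √2 / 2)) • z.2 := by module
    _ = z.2 := by rw [h_sqrt, one_smul]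

lemma exp_add_le_half_add (a b : ℝ) :
    Real.exp (a + b) ≤ (Real.exp (2 * a) + Real.exp (2 * b)) / 2 := by
  rw [two_mul, two_mul, Real.exp_add, Real.exp_add, Real.exp_add]
  linarith [two_mul_le_add_sq (Real.exp a) (Real.exp b)]

variable {E : Type*} [NormedAddCommGroup E] [NormedSpace ℝ E] [MeasurableSpace E]

lemma mgf_dual {μ : Measure E} [IsGaussian μ] (φ : StrongDual ℝ E) (l : ℝ) :
    mgf φ μ l = Real.exp (μ[φ] * l + Var[φ; μ] * l ^ 2 / 2) := by
  rw [mgf_gaussianReal (IsGaussian.map_eq_gaussianReal φ),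
    Real.coe_toNNReal _ (variance_nonneg _ _)]

variable [BorelSpace E]

lemma integrable_exp_mul_dual (μ : Measure E) [IsGaussian μ] (φ : StrongDual ℝ E) (l : ℝ) :
    Integrable (fun x ↦ Real.exp (l * φ x)) μ := by
  have h := integrable_exp_mul_gaussianReal (μ := μ[φ]) (v := Var[φ; μ].toNNReal) l
  rw [← IsGaussian.map_eq_gaussianReal φ] at h
  exact h.comp_measurable φ.continuous.measurable

variable [SecondCountableTopology E] [CompleteSpace E] {μ : Measure E} [IsGaussian μ]
  {p : Seminorm ℝ E} {l v : ℝ}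

lemma integrable_exp_mul_seminorm (hp : Continuous p) (l : ℝ) :
    Integrable (fun x ↦ Real.exp (l * p x)) μ := by
  obtain ⟨C, -, hpC⟩ := p.bound_of_continuous_normedSpace hp
  obtain ⟨c, hc, hint⟩ := IsGaussian.exists_integrable_exp_sq μ
  refine (hint.const_mul (Real.exp ((|l| * C) ^ 2 / (4 * c)))).mono' (by fun_prop)
    (ae_of_all _ fun x ↦ ?_)
  have hlp : l * p x ≤ |l| * C * ‖x‖ := by
    rw [mul_assoc]
    exact mul_le_mul (le_abs_self l) (hpC x) (apply_nonneg p x) (abs_nonneg l)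
  have hsq : (|l| * C) ^ 2 / (4 * c) + c * ‖x‖ ^ 2 - |l| * C * ‖x‖
      = c * (‖x‖ - |l| * C / (2 * c)) ^ 2 := by
    field_simp
    ring
  rw [Real.norm_eq_abs, Real.abs_exp, ← Real.exp_add, Real.exp_le_exp]
  linarith [mul_nonneg hc.le (sq_nonneg (‖x‖ - |l| * C / (2 * c)))]

lemma integrable_seminorm (hp : Continuous p) : Integrable p μ := by
  have h_univ : integrableExpSet p μ = univ :=
    eq_univ_of_forall fun l ↦ integrable_exp_mul_seminorm hp l
  exact integrable_of_mem_interior_integrableExpSet (by simp [h_univ])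

lemma integrable_exp_seminorm_sub (hp : Continuous p) (hl : 0 ≤ l) (c : ℝ) :
    Integrable (fun z : E × E ↦ Real.exp (l * (p z.1 - p (c • (z.1 + z.2))))) (μ.prod μ) := by
  refine ((integrable_exp_mul_seminorm hp l).comp_fst μ).mono' (by fun_prop)
    (ae_of_all _ fun z ↦ ?_)
  rw [Real.norm_eq_abs, Real.abs_exp, Real.exp_le_exp]
  exact mul_le_mul_of_nonneg_left (sub_le_self _ (apply_nonneg p _)) hl

lemma integral_comp_rotation (hμ : ∀ φ : StrongDual ℝ E, μ[φ] = 0) {F : E × E → ℝ}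
    (hF : Continuous F) (α : ℝ) :
    ∫ z, F (ContinuousLinearMap.rotation α z) ∂μ.prod μ = ∫ z, F z ∂μ.prod μ := by
  conv_rhs => rw [← IsGaussian.map_rotation_eq_self_of_forall_strongDual_eq_zero hμ α]
  rw [integral_map (by fun_prop) hF.aestronglyMeasurable]

-- With `s = (x + y) / √2`, AM-GM bounds `exp (l (p x - p y))` by the mean of
-- `exp (2 l (p x - p s))` and `exp (2 l (p s - p y))`; the rotation by `π / 4` sends `(x, s)`
-- to `(s, y)`, so these two functions have the same integral.
lemma mgf_mul_mgf_neg_le (hμ : ∀ φ : StrongDual ℝ E, μ[φ] = 0) (hp : Continuous p) (hl : 0 ≤ l) :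
    mgf p μ l * mgf p μ (-l) ≤
      ∫ z, Real.exp (2 * l * (p z.1 - p ((√2 / 2) • (z.1 + z.2)))) ∂μ.prod μ := by
  set F : E × E → ℝ := fun z ↦ Real.exp (2 * l * (p z.1 - p ((√2 / 2) • (z.1 + z.2))))
  set R : E × E →L[ℝ] E × E := ContinuousLinearMap.rotation (Real.pi / 4)
  have hF_cont : Continuous F := by fun_prop
  have hF_int : Integrable F (μ.prod μ) := integrable_exp_seminorm_sub hp (by positivity) _
  have hFR_int : Integrable (fun z ↦ F (R z)) (μ.prod μ) :=
    (integrable_map_measure (f := R) hF_cont.aestronglyMeasurable (by fun_prop)).1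
      (by rwa [IsGaussian.map_rotation_eq_self_of_forall_strongDual_eq_zero hμ])
  have hFR (z : E × E) : F (R z) = Real.exp (2 * l * (p ((√2 / 2) • (z.1 + z.2)) - p z.2)) := by
    simp only [F, R]
    rw [smul_rotation_pi_div_four_fst_add_snd, rotation_pi_div_four_fst]
  have h_amgm (z : E × E) : Real.exp (l * p z.1) * Real.exp (-l * p z.2) ≤ (F z + F (R z)) / 2 := by
    set s := p ((√2 / 2) • (z.1 + z.2))
    calc Real.exp (l * p z.1) * Real.exp (-l * p z.2)
        = Real.exp (l * (p z.1 - s) + l * (s - p z.2)) := by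
          rw [← Real.exp_add]
          ring_nf
      _ ≤ (Real.exp (2 * (l * (p z.1 - s))) + Real.exp (2 * (l * (s - p z.2)))) / 2 :=
          exp_add_le_half_add _ _
      _ = (F z + F (R z)) / 2 := by rw [hFR, ← mul_assoc, ← mul_assoc]
  calc mgf p μ l * mgf p μ (-l)
      = ∫ z, Real.exp (l * p z.1) * Real.exp (-l * p z.2) ∂μ.prod μ :=
        (integral_prod_mul (fun x ↦ Real.exp (l * p x)) fun y ↦ Real.exp (-l * p y)).symm
    _ ≤ ∫ z, (F z + F (R z)) / 2 ∂μ.prod μ :=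
        integral_mono ((integrable_exp_mul_seminorm hp l).mul_prod
          (integrable_exp_mul_seminorm hp (-l))) ((hF_int.add hFR_int).div_const 2) h_amgm
    _ = ∫ z, F z ∂μ.prod μ := by
        rw [integral_div, integral_add hF_int hFR_int, integral_comp_rotation hμ hF_cont]
        ring

-- For fixed `x`, the convex function `p` lies above the linear functional supporting it at `x`.
lemma integral_exp_seminorm_sub_le (hμ : ∀ φ : StrongDual ℝ E, μ[φ] = 0) (hp : Continuous p)
    (hv : ∀ φ : StrongDual ℝ E, (∀ y, |φ y| ≤ p y) → Var[φ; μ] ≤ v) (hl : 0 ≤ l) :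
    ∫ z, Real.exp (2 * l * (p z.1 - p ((√2 / 2) • (z.1 + z.2)))) ∂μ.prod μ ≤
      Real.exp (l ^ 2 * v) * mgf p μ ((2 - √2) * l) := by
  have h_int := integrable_exp_seminorm_sub (μ := μ) hp (mul_nonneg zero_le_two hl) (√2 / 2)
  have h_inner (x : E) : ∫ y, Real.exp (2 * l * (p x - p ((√2 / 2) • (x + y)))) ∂μ ≤
      Real.exp (l ^ 2 * v) * Real.exp ((2 - √2) * l * p x) := by
    obtain ⟨φ, hφ_x, hφ_le⟩ := exists_dual_eq_seminorm hp x
    calc ∫ y, Real.exp (2 * l * (p x - p ((√2 / 2) • (x + y)))) ∂μ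
        ≤ ∫ y, Real.exp ((2 - √2) * l * p x) * Real.exp (-(√2 * l) * φ y) ∂μ := by
          refine integral_mono_of_nonneg (ae_of_all _ fun y ↦ (Real.exp_pos _).le)
            ((integrable_exp_mul_dual μ φ _).const_mul _) (ae_of_all _ fun y ↦ ?_)
          have h := (le_abs_self _).trans (hφ_le ((√2 / 2) • (x + y)))
          rw [map_smul, map_add, hφ_x, smul_eq_mul] at h
          refine (Real.exp_le_exp.2 ?_).trans_eq (Real.exp_add _ _)
          linarith [mul_le_mul_of_nonneg_left h (mul_nonneg zero_le_two hl)]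
      _ = Real.exp ((2 - √2) * l * p x) * Real.exp (l ^ 2 * Var[φ; μ]) := by
          have h_sqrt : (√2 : ℝ) ^ 2 = 2 := Real.sq_sqrt zero_le_two
          rw [integral_const_mul, ← mgf, mgf_dual, hμ, neg_sq, mul_pow, h_sqrt]
          ring_nf
      _ ≤ Real.exp (l ^ 2 * v) * Real.exp ((2 - √2) * l * p x) := by
          rw [mul_comm]
          gcongr
          exact hv φ hφ_le
  rw [integral_prod _ h_int, mgf, ← integral_const_mul]
  exact integral_mono h_int.integral_prod_left
    ((integrable_exp_mul_seminorm hp _).const_mul _) h_inner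

lemma cgf_seminorm_le (hμ : ∀ φ : StrongDual ℝ E, μ[φ] = 0) (hp : Continuous p)
    (hv : ∀ φ : StrongDual ℝ E, (∀ y, |φ y| ≤ p y) → Var[φ; μ] ≤ v) (hl : 0 ≤ l) :
    cgf p μ l ≤ (1 + √2) * (l * μ[p] + l ^ 2 * v) := by
  have h_sqrt : (√2 : ℝ) ^ 2 = 2 := Real.sq_sqrt zero_le_two
  have h_lb : 1 ≤ √2 := Real.one_le_sqrt.2 one_le_two
  have h_ub : √2 ≤ 2 := by nlinarith
  have h_exp (s : ℝ) := integrable_exp_mul_seminorm (μ := μ) hp s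
  have h_log : cgf p μ l + cgf p μ (-l) ≤ l ^ 2 * v + cgf p μ ((2 - √2) * l) := by
    have h := (mgf_mul_mgf_neg_le hμ hp hl).trans (integral_exp_seminorm_sub_le hμ hp hv hl)
    rw [← exp_cgf (h_exp _), ← exp_cgf (h_exp _), ← exp_cgf (h_exp _), ← Real.exp_add,
      ← Real.exp_add, Real.exp_le_exp] at h
    exact h
  have h_mean := mul_integral_le_cgf (integrable_seminorm hp) (h_exp (-l))
  have h_interp := cgf_mul_le (θ := 2 - √2) (by linarith) (by linarith) (h_exp l)
  have h_gap : (√2 - 1) * cgf p μ l ≤ l * μ[p] + l ^ 2 * v := by linarith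
  calc cgf p μ l = (1 + √2) * ((√2 - 1) * cgf p μ l) := by linear_combination -cgf p μ l * h_sqrt
    _ ≤ (1 + √2) * (l * μ[p] + l ^ 2 * v) := by gcongr

theorem measureReal_seminorm_ge_le (hμ : ∀ φ : StrongDual ℝ E, μ[φ] = 0) (hp : Continuous p)
    (hv : ∀ φ : StrongDual ℝ E, (∀ y, |φ y| ≤ p y) → Var[φ; μ] ≤ v) {ε : ℝ} (hε : 0 ≤ ε) :
    μ.real {x | (1 + √2) * μ[p] + ε ≤ p x} ≤ Real.exp (-ε ^ 2 / (4 * (1 + √2) * v)) := by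
  rcases eq_or_ne v 0 with rfl | hv₀
  · simp [measureReal_le_one]
  have hv_nonneg : 0 ≤ v := by simpa using hv 0 fun y ↦ by simp
  set l := ε / (2 * (1 + √2) * v) with hl
  have hl₀ : 0 ≤ l := by positivity
  refine (measure_ge_le_exp_cgf _ hl₀ (integrable_exp_mul_seminorm hp l)).trans
    (Real.exp_le_exp.2 ?_)
  calc -l * ((1 + √2) * μ[p] + ε) + cgf p μ l
      ≤ -l * ((1 + √2) * μ[p] + ε) + (1 + √2) * (l * μ[p] + l ^ 2 * v) := by
        gcongr
        exact cgf_seminorm_le hμ hp hv hl₀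
    _ = -ε ^ 2 / (4 * (1 + √2) * v) := by
        rw [hl]
        field_simp
        ring

end Concentration

section HeatMeasure

variable {E : Type*} [NormedAddCommGroup E] [InnerProductSpace ℝ E] [FiniteDimensional ℝ E]
  [MeasurableSpace E] [BorelSpace E] {t : ℝ}

/-- The law of `√(2t) G` for a standard Gaussian vector `G`, that is, the measure with density the
heat kernel at time `t` (`heatMeasure_eq_withDensity`). Defining it as an image of `stdGaussian`
makes it a Gaussian measure at every `t`; for `t ≤ 0` it is the Dirac mass at `0`. -/
def heatMeasure (E : Type*) [NormedAddCommGroup E] [InnerProductSpace ℝ E] [FiniteDimensional ℝ E]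
    [MeasurableSpace E] [BorelSpace E] (t : ℝ) : Measure E :=
  (stdGaussian E).map (√(2 * t) • ContinuousLinearMap.id ℝ E)

instance : IsGaussian (heatMeasure E t) := by
  unfold heatMeasure
  infer_instance

lemma integral_heatMeasure {F : Type*} [NormedAddCommGroup F] [NormedSpace ℝ F] {g : E → F}
    (hg : Continuous g) : ∫ z, g z ∂heatMeasure E t = ∫ z, g (√(2 * t) • z) ∂stdGaussian E :=
  integral_map (by fun_prop) hg.aestronglyMeasurable

lemma integral_dual_heatMeasure (φ : StrongDual ℝ E) : (heatMeasure E t)[φ] = 0 := by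
  rw [integral_heatMeasure φ.continuous]
  simp only [map_smul, integral_smul, integral_strongDual_stdGaussian, smul_zero]

lemma variance_dual_heatMeasure (ht : 0 ≤ t) (φ : StrongDual ℝ E) :
    Var[φ; heatMeasure E t] = 2 * t * ‖φ‖ ^ 2 := by
  have h_comp : φ ∘ (√(2 * t) • ContinuousLinearMap.id ℝ E) = ⇑(√(2 * t) • φ) := by
    ext z
    simp
  rw [heatMeasure, variance_map φ.continuous.aemeasurable (by fun_prop), h_comp,
    variance_dual_stdGaussian, norm_smul, mul_pow, Real.norm_eq_abs, sq_abs,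
    Real.sq_sqrt (by positivity)]

lemma integral_norm_sq_stdGaussian : ∫ z : E, ‖z‖ ^ 2 ∂stdGaussian E = Module.finrank ℝ E := by
  set b := stdOrthonormalBasis ℝ E
  have h_coord (i) : ∫ z, innerSL ℝ (b i) z ^ 2 ∂stdGaussian E = 1 := by
    rw [← variance_of_integral_eq_zero (by fun_prop) (integral_strongDual_stdGaussian _),
      variance_dual_stdGaussian, innerSL_apply_norm, b.norm_eq_one, one_pow]
  have h_int (i) : Integrable (fun z ↦ innerSL ℝ (b i) z ^ 2) (stdGaussian E) :=
    (IsGaussian.memLp_dual _ (innerSL ℝ (b i)) 2 (by simp)).integrable_sq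
  calc ∫ z, ‖z‖ ^ 2 ∂stdGaussian E
      = ∫ z, ∑ i, innerSL ℝ (b i) z ^ 2 ∂stdGaussian E := by
        congr with z
        rw [← b.sum_sq_inner_right z]
        rfl
    _ = Module.finrank ℝ E := by
        simp only [integral_finsetSum _ fun i _ ↦ h_int i, h_coord, Finset.sum_const,
          Finset.card_univ, Fintype.card_fin, nsmul_eq_mul, mul_one]

lemma integral_norm_stdGaussian_le : ∫ z : E, ‖z‖ ∂stdGaussian E ≤ √(Module.finrank ℝ E) := by
  have h_var := variance_nonneg (fun z : E ↦ ‖id z‖) (stdGaussian E)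
  rw [variance_eq_sub (IsGaussian.memLp_two_id (μ := stdGaussian E)).norm] at h_var
  refine Real.le_sqrt_of_sq_le ?_
  rw [← integral_norm_sq_stdGaussian]
  exact sub_nonneg.1 h_var

lemma integral_norm_heatMeasure_le :
    ∫ z, ‖z‖ ∂heatMeasure E t ≤ √(2 * t) * √(Module.finrank ℝ E) := by
  rw [integral_heatMeasure continuous_norm]
  simp only [norm_smul, Real.norm_eq_abs, abs_of_nonneg (Real.sqrt_nonneg _), integral_const_mul]
  gcongr
  exact integral_norm_stdGaussian_le

lemma charFun_heatMeasure (ht : 0 ≤ t) (w : E) :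
    charFun (heatMeasure E t) w = Complex.exp (-(t * ‖w‖ ^ 2 : ℝ)) := by
  have h_map : heatMeasure E t = (stdGaussian E).map (fun z ↦ √(2 * t) • z) := rfl
  rw [h_map, charFun_map_smul, charFun_stdGaussian, norm_smul, Real.norm_eq_abs,
    abs_of_nonneg (Real.sqrt_nonneg _), ← Complex.ofReal_pow, mul_pow,
    Real.sq_sqrt (by positivity)]
  congr 1
  push_cast
  ring

end HeatMeasure

section HeatKernel

variable {n : ℕ} {t : ℝ}

lemma heatKernel_nonneg (ht : 0 ≤ t) (z : EuclideanSpace ℝ (Fin n)) : 0 ≤ heatKernel n t z := by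
  unfold heatKernel
  positivity

lemma continuous_heatKernel : Continuous (heatKernel n t) := by
  unfold heatKernel
  fun_prop

lemma integral_heatKernel_mul_cexp (ht : 0 < t) (c : ℂ) (w : EuclideanSpace ℝ (Fin n)) :
    ∫ z, heatKernel n t z * Complex.exp (c * inner ℝ w z) =
      Complex.exp (t * c ^ 2 * ‖w‖ ^ 2) := by
  have hb : 0 < ((1 / (4 * t) : ℝ) : ℂ).re := by
    rw [Complex.ofReal_re]
    positivity
  have h_eq (z : EuclideanSpace ℝ (Fin n)) :
      heatKernel n t z * Complex.exp (c * inner ℝ w z) =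
        ((4 * Real.pi * t) ^ (-(n : ℝ) / 2) : ℝ) *
          Complex.exp (-((1 / (4 * t) : ℝ) : ℂ) * ‖z‖ ^ 2 + c * inner ℝ w z) := by
    rw [heatKernel, Complex.exp_add]
    push_cast
    rw [mul_assoc]
    congr 3
    field_simp
  have h_const : (((4 * Real.pi * t) ^ (-(n : ℝ) / 2) : ℝ) : ℂ) *
      ((Real.pi : ℂ) / ((1 / (4 * t) : ℝ) : ℂ)) ^
        ((Module.finrank ℝ (EuclideanSpace ℝ (Fin n)) : ℂ) / 2) = 1 := by
    have h_base : (Real.pi : ℂ) / ((1 / (4 * t) : ℝ) : ℂ) = ((4 * Real.pi * t : ℝ) : ℂ) := by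
      push_cast
      field_simp
    rw [h_base, finrank_euclideanSpace_fin,
      show (n : ℂ) / 2 = ((n / 2 : ℝ) : ℂ) by push_cast; rfl,
      ← Complex.ofReal_cpow (by positivity), ← Complex.ofReal_mul,
      ← Real.rpow_add (by positivity), neg_div, neg_add_cancel, Real.rpow_zero, Complex.ofReal_one]
  simp_rw [h_eq]
  rw [integral_const_mul, GaussianFourier.integral_cexp_neg_mul_sq_norm_add hb, ← mul_assoc,
    h_const, one_mul]
  congr 1
  have : (t : ℂ) ≠ 0 := mod_cast ht.ne'
  push_cast
  field_simp

lemma integral_withDensity_heatKernel (ht : 0 ≤ t) {F : Type*} [NormedAddCommGroup F]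
    [NormedSpace ℝ F] (g : EuclideanSpace ℝ (Fin n) → F) :
    ∫ z, g z ∂(volume.withDensity fun z ↦ ENNReal.ofReal (heatKernel n t z)) =
      ∫ z, heatKernel n t z • g z := by
  rw [integral_withDensity_eq_integral_toReal_smul
    continuous_heatKernel.measurable.ennreal_ofReal (ae_of_all _ fun z ↦ ofReal_lt_top)]
  simp_rw [ENNReal.toReal_ofReal (heatKernel_nonneg ht _)]

lemma integral_heatKernel (ht : 0 < t) : ∫ z, heatKernel n t z = 1 := by
  have h := integral_heatKernel_mul_cexp ht 0 (0 : EuclideanSpace ℝ (Fin n))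
  simp only [zero_mul, Complex.exp_zero, mul_one, ne_eq, OfNat.ofNat_ne_zero, not_false_eq_true,
    zero_pow, mul_zero, integral_complex_ofReal] at h
  exact mod_cast h

lemma heatMeasure_eq_withDensity (ht : 0 < t) :
    heatMeasure (EuclideanSpace ℝ (Fin n)) t =
      volume.withDensity fun z ↦ ENNReal.ofReal (heatKernel n t z) := by
  have h_int : Integrable (heatKernel n t) :=
    Integrable.of_integral_ne_zero (by simp [integral_heatKernel ht])
  have := isFiniteMeasure_withDensity_ofReal h_int.2
  refine Measure.ext_of_charFun (funext fun w ↦ ?_)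
  rw [charFun_heatMeasure ht.le, charFun_apply, integral_withDensity_heatKernel ht.le]
  simp_rw [real_inner_comm w, mul_comm _ Complex.I, Complex.real_smul]
  rw [integral_heatKernel_mul_cexp ht, Complex.I_sq]
  congr 1
  push_cast
  ring

lemma heat_eq_integral_heatMeasure (ht : 0 < t) {Y : Type*} [NormedAddCommGroup Y]
    [NormedSpace ℝ Y] (f : EuclideanSpace ℝ (Fin n) → Y) (x : EuclideanSpace ℝ (Fin n)) :
    heat t f x = ∫ z, f (x - z) ∂heatMeasure (EuclideanSpace ℝ (Fin n)) t := by
  rw [heatMeasure_eq_withDensity ht, integral_withDensity_heatKernel ht.le, heat]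

end HeatKernel

section PolarCoordinates

variable {E : Type*} [NormedAddCommGroup E] [NormedSpace ℝ E] [FiniteDimensional ℝ E]
  [Nontrivial E] [MeasurableSpace E] [BorelSpace E] {μ : Measure E} [μ.IsAddHaarMeasure] {g : E → ℝ}

lemma integral_fun_norm_mul_of_homogeneous (hg : ∀ r : ℝ, 0 < r → ∀ x, g (r • x) = r * g x)
    (k : ℝ → ℝ) :
    ∫ x, k ‖x‖ * g x ∂μ = (∫ σ : sphere (0 : E) 1, g σ ∂μ.toSphere) *
      ∫ r : Ioi (0 : ℝ), k r * r ∂Measure.volumeIoiPow (Module.finrank ℝ E - 1) := by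
  have h_polar (x : ({0}ᶜ : Set E)) : k ‖(x : E)‖ * g x =
      g (homeomorphUnitSphereProd E x).1 * (k (homeomorphUnitSphereProd E x).2 *
        (homeomorphUnitSphereProd E x).2) := by
    have hx : 0 < ‖(x : E)‖ := norm_pos_iff.2 x.2
    rw [homeomorphUnitSphereProd_apply_fst_coe, homeomorphUnitSphereProd_apply_snd_coe,
      hg _ (inv_pos.2 hx)]
    field_simp
  calc ∫ x, k ‖x‖ * g x ∂μ
      = ∫ x : ({0}ᶜ : Set E), k ‖(x : E)‖ * g x ∂μ.comap Subtype.val := by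
        rw [integral_subtype_comap (measurableSet_singleton _).compl fun x ↦ k ‖x‖ * g x,
          restrict_compl_singleton]
    _ = ∫ z : sphere (0 : E) 1 × Ioi (0 : ℝ), g z.1 * (k z.2 * z.2)
          ∂μ.toSphere.prod (Measure.volumeIoiPow (Module.finrank ℝ E - 1)) := by
        simp_rw [h_polar]
        exact μ.measurePreserving_homeomorphUnitSphereProd.integral_comp
          (Homeomorph.measurableEmbedding _) fun z ↦ g z.1 * (k z.2 * z.2)
    _ = _ := integral_prod_mul (fun σ : sphere (0 : E) 1 ↦ g σ) fun r : Ioi (0 : ℝ) ↦ k r * r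

lemma integral_fun_norm_mul_eq_average_mul (hg : ∀ r : ℝ, 0 < r → ∀ x, g (r • x) = r * g x)
    (k : ℝ → ℝ) :
    ∫ x, k ‖x‖ * g x ∂μ =
      (⨍ σ : sphere (0 : E) 1, g σ ∂μ.toSphere) * ∫ x, k ‖x‖ * ‖x‖ ∂μ := by
  have h_norm (r : ℝ) (hr : 0 < r) (x : E) : ‖r • x‖ = r * ‖x‖ := by
    rw [norm_smul, Real.norm_of_nonneg hr.le]
  have h_area : μ.toSphere.real univ ≠ 0 := by
    rw [measureReal_ne_zero_iff, Ne, Measure.measure_univ_eq_zero]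
    exact Measure.toSphere_ne_zero μ
  rw [integral_fun_norm_mul_of_homogeneous hg, integral_fun_norm_mul_of_homogeneous h_norm,
    average_eq]
  simp only [norm_eq_of_mem_sphere, integral_const, smul_eq_mul, mul_one]
  field_simp

end PolarCoordinates

section MeanAndTail

variable {n : ℕ} (p : Seminorm ℝ (EuclideanSpace ℝ (Fin n))) {t : ℝ}

lemma MX_nonneg : 0 ≤ MX p := by
  rw [MX, average_eq]
  exact smul_nonneg (by positivity) (integral_nonneg fun σ ↦ apply_nonneg p _)

lemma bX_nonneg : 0 ≤ bX p :=
  Real.sSup_nonneg (forall_mem_image.2 fun σ _ ↦ apply_nonneg p σ)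

lemma le_bX_mul_norm (x : EuclideanSpace ℝ (Fin n)) : p x ≤ bX p * ‖x‖ := by
  rcases eq_or_ne x 0 with rfl | hx
  · simp
  have hx_pos : 0 < ‖x‖ := norm_pos_iff.2 hx
  have h_bdd : BddAbove (p '' sphere 0 1) :=
    ((isCompact_sphere 0 1).image (seminorm_continuous p)).bddAbove
  have h_unit : p (‖x‖⁻¹ • x) ≤ bX p :=
    le_csSup h_bdd (mem_image_of_mem p (by simp [norm_smul, hx_pos.ne']))
  rwa [map_smul_eq_mul, norm_inv, norm_norm, inv_mul_le_iff₀' hx_pos] at h_unit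

lemma norm_le_bX {φ : StrongDual ℝ (EuclideanSpace ℝ (Fin n))} (hφ : ∀ y, |φ y| ≤ p y) :
    ‖φ‖ ≤ bX p :=
  φ.opNorm_le_bound (bX_nonneg p) fun y ↦ (hφ y).trans (le_bX_mul_norm p y)

lemma integral_seminorm_heatMeasure_eq (ht : 0 < t) :
    ∫ z, p z ∂heatMeasure (EuclideanSpace ℝ (Fin n)) t =
      MX p * ∫ z, ‖z‖ ∂heatMeasure (EuclideanSpace ℝ (Fin n)) t := by
  rcases subsingleton_or_nontrivial (EuclideanSpace ℝ (Fin n)) with _ | _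
  · simp [Subsingleton.eq_zero]
  · have h_hom (r : ℝ) (hr : 0 < r) (x : EuclideanSpace ℝ (Fin n)) : p (r • x) = r * p x := by
      rw [map_smul_eq_mul, Real.norm_of_nonneg hr.le]
    rw [heatMeasure_eq_withDensity ht, integral_withDensity_heatKernel ht.le,
      integral_withDensity_heatKernel ht.le]
    exact integral_fun_norm_mul_eq_average_mul h_hom
      fun r ↦ (4 * Real.pi * t) ^ (-(n : ℝ) / 2) * Real.exp (-r ^ 2 / (4 * t))

lemma integral_seminorm_heatMeasure_le (ht : 0 < t) :
    ∫ z, p z ∂heatMeasure (EuclideanSpace ℝ (Fin n)) t ≤ √(2 * t) * (MX p * √n) := by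
  rw [integral_seminorm_heatMeasure_eq p ht, mul_left_comm]
  refine mul_le_mul_of_nonneg_left ?_ (MX_nonneg p)
  simpa only [finrank_euclideanSpace_fin] using
    integral_norm_heatMeasure_le (E := EuclideanSpace ℝ (Fin n)) (t := t)

lemma variance_heatMeasure_le_of_le_seminorm (ht : 0 ≤ t)
    {φ : StrongDual ℝ (EuclideanSpace ℝ (Fin n))} (hφ : ∀ y, |φ y| ≤ p y) :
    Var[φ; heatMeasure _ t] ≤ 2 * t * bX p ^ 2 := by
  rw [variance_dual_heatMeasure ht]
  gcongr
  exact norm_le_bX p hφ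

lemma one_add_sqrt_two_mul_integral_seminorm_heatMeasure_le (ht : 0 < t) :
    (1 + √2) * ∫ z, p z ∂heatMeasure (EuclideanSpace ℝ (Fin n)) t ≤ 5 * (√t * (MX p * √n)) := by
  have h_sqrt : (√2 : ℝ) ^ 2 = 2 := Real.sq_sqrt zero_le_two
  have h_sqrt_le : √2 ≤ 2 := Real.sqrt_le_iff.2 (by norm_num)
  have hM := MX_nonneg p
  have h_mean := integral_seminorm_heatMeasure_le p ht
  rw [Real.sqrt_mul zero_le_two] at h_mean
  calc (1 + √2) * ∫ z, p z ∂heatMeasure (EuclideanSpace ℝ (Fin n)) t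
      ≤ (1 + √2) * (√2 * √t * (MX p * √n)) := by gcongr
    _ = (√2 + 2) * (√t * (MX p * √n)) := by linear_combination √t * (MX p * √n) * h_sqrt
    _ ≤ 5 * (√t * (MX p * √n)) := by
        gcongr
        linarith

lemma heatMeasure_real_seminorm_ge_le (ht : 0 < t) (hb : 0 < bX p) {q r : ℝ} (hq : 0 ≤ q)
    (hr : 5 * (√t * (MX p * √n + bX p * q)) ≤ r) :
    (heatMeasure (EuclideanSpace ℝ (Fin n)) t).real {z | r ≤ p z} ≤ Real.exp (-q ^ 2) := by
  set ν := heatMeasure (EuclideanSpace ℝ (Fin n)) t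
  set ε := 5 * (√t * (bX p * q)) with hε
  have h_level : (1 + √2) * ν[p] + ε ≤ r := by
    linarith [one_add_sqrt_two_mul_integral_seminorm_heatMeasure_le p ht]
  have h_exponent : -ε ^ 2 / (4 * (1 + √2) * (2 * t * bX p ^ 2)) ≤ -q ^ 2 := by
    have h_sqrt_le : √2 ≤ 2 := Real.sqrt_le_iff.2 (by norm_num)
    rw [div_le_iff₀ (by positivity), hε, mul_pow, mul_pow, Real.sq_sqrt ht.le]
    nlinarith [mul_nonneg ht.le (sq_nonneg (bX p * q))]
  calc ν.real {z | r ≤ p z} ≤ ν.real {z | (1 + √2) * ν[p] + ε ≤ p z} :=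
        measureReal_mono fun z hz ↦ h_level.trans hz
    _ ≤ Real.exp (-ε ^ 2 / (4 * (1 + √2) * (2 * t * bX p ^ 2))) :=
        measureReal_seminorm_ge_le integral_dual_heatMeasure (seminorm_continuous p)
          (fun φ ↦ variance_heatMeasure_le_of_le_seminorm p ht.le) (by positivity)
    _ ≤ Real.exp (-q ^ 2) := Real.exp_le_exp.2 h_exponent

lemma mul_heatMeasure_real_seminorm_ge_le_one (ht : 0 < t) {L r : ℝ} (hL : 1 ≤ L) (hr₀ : 0 < r)
    (hr : 5 * (√t * (MX p * √n + bX p * √(Real.log L))) ≤ r) :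
    L * (heatMeasure (EuclideanSpace ℝ (Fin n)) t).real {z | r ≤ p z} ≤ 1 := by
  have hL₀ : 0 < L := one_pos.trans_le hL
  rcases (bX_nonneg p).eq_or_lt with hb | hb
  · have hp_zero (z) : p z ≤ 0 := by simpa only [← hb, zero_mul] using le_bX_mul_norm p z
    have h_empty : {z | r ≤ p z} = ∅ :=
      eq_empty_of_forall_notMem fun z hz ↦ ((hp_zero z).trans_lt hr₀).not_ge hz
    simp [h_empty]
  · have h_tail := heatMeasure_real_seminorm_ge_le p ht hb (Real.sqrt_nonneg _) hr
    rw [Real.sq_sqrt (Real.log_nonneg hL), Real.exp_neg, Real.exp_log hL₀] at h_tail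
    exact (mul_le_mul_of_nonneg_left h_tail hL₀.le).trans_eq (mul_inv_cancel₀ hL₀.ne')

end MeanAndTail

section Smoothing

variable {E : Type*} [NormedAddCommGroup E] [NormedSpace ℝ E] {p : Seminorm ℝ E}
  {Y : Type*} [NormedAddCommGroup Y] {L : ℝ} {f : E → Y}

lemma continuous_of_norm_sub_le_mul_seminorm (hp : Continuous p)
    (hf : ∀ x y, ‖f x - f y‖ ≤ L * p (x - y)) : Continuous f := by
  refine continuous_iff_continuousAt.2 fun x ↦ tendsto_iff_norm_sub_tendsto_zero.2 ?_
  have h_lim : Filter.Tendsto (fun y ↦ L * p (y - x)) (nhds x) (nhds 0) := by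
    have h := (show Continuous fun y ↦ L * p (y - x) by fun_prop).tendsto x
    simpa only [sub_self, map_zero, mul_zero] using h
  exact squeeze_zero (fun y ↦ norm_nonneg _) (fun y ↦ hf y x) h_lim

variable [MeasurableSpace E] [BorelSpace E] [SecondCountableTopology E] {μ : Measure E}

lemma integrable_comp_sub_left_of_norm_sub_le [IsFiniteMeasure μ] (hp : Continuous p)
    (hp_int : Integrable p μ) (hf : ∀ x y, ‖f x - f y‖ ≤ L * p (x - y)) (x : E) :
    Integrable (fun z ↦ f (x - z)) μ := by
  have hf_cont := continuous_of_norm_sub_le_mul_seminorm hp hf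
  have h_diff : Integrable (fun z ↦ f (x - z) - f x) μ := by
    refine (hp_int.const_mul L).mono' (Continuous.aestronglyMeasurable (by fun_prop))
      (ae_of_all _ fun z ↦ ?_)
    simpa only [sub_sub_cancel_left, map_neg_eq_map] using hf (x - z) x
  exact (h_diff.add (integrable_const (f x))).congr (ae_of_all _ fun z ↦ sub_add_cancel _ _)

variable [NormedSpace ℝ Y] [IsProbabilityMeasure μ]

-- The points `x - z` and `x + w - z` both lie in the unit ball of `p` unless `r ≤ p z`, and on that
-- event, of probability at most `1 / L`, the global Lipschitz constant `L` is affordable.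
lemma norm_integral_comp_sub_left_sub_le (hp : Continuous p) (hp_int : Integrable p μ)
    (hf_ball : ∀ x, p x ≤ 1 → ∀ y, p y ≤ 1 → ‖f x - f y‖ ≤ p (x - y))
    (hf : ∀ x y, ‖f x - f y‖ ≤ L * p (x - y)) {x w : E} {r : ℝ} (hx : p x + 2 * r ≤ 1)
    (hw : p w ≤ r) (h_tail : L * μ.real {z | r ≤ p z} ≤ 1) :
    ‖∫ z, f (x + w - z) ∂μ - ∫ z, f (x - z) ∂μ‖ ≤ 2 * p w := by
  set S : Set E := {z | r ≤ p z}
  have hS : MeasurableSet S := (isClosed_le continuous_const hp).measurableSet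
  have h_diff (z : E) : x + w - z - (x - z) = w := by abel
  have h_bound (z : E) :
      ‖f (x + w - z) - f (x - z)‖ ≤ p w + S.indicator (fun _ ↦ L * p w) z := by
    by_cases hz : z ∈ S
    · rw [indicator_of_mem hz]
      have h := hf (x + w - z) (x - z)
      rw [h_diff] at h
      linarith [apply_nonneg p w]
    · rw [indicator_of_notMem hz, add_zero]
      have hz_lt : p z < r := not_le.1 hz
      have h_base : p (x - z) ≤ p x + p z := map_sub_le_add p x z
      have h_shift : p (x + w - z) ≤ p x + p w + p z :=
        (map_sub_le_add p (x + w) z).trans (by gcongr; exact map_add_le_add p x w)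
      have h := hf_ball (x + w - z) (by linarith) (x - z) (by linarith [apply_nonneg p w])
      rwa [h_diff] at h
  have h_int : Integrable (S.indicator fun _ ↦ L * p w) μ := (integrable_const _).indicator hS
  rw [← integral_sub (integrable_comp_sub_left_of_norm_sub_le hp hp_int hf _)
    (integrable_comp_sub_left_of_norm_sub_le hp hp_int hf _)]
  calc ‖∫ z, (f (x + w - z) - f (x - z)) ∂μ‖
      ≤ ∫ z, (p w + S.indicator (fun _ ↦ L * p w) z) ∂μ :=
        norm_integral_le_of_norm_le ((integrable_const _).add h_int) (ae_of_all _ h_bound)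
    _ = p w + L * μ.real S * p w := by
        rw [integral_add (integrable_const _) h_int, integral_indicator_const _ hS, integral_const,
          probReal_univ, one_smul, smul_eq_mul]
        ring
    _ ≤ p w + 1 * p w := by gcongr
    _ = 2 * p w := by ring

end Smoothing

section TaylorPolynomial

lemma norm_fderiv_apply_le_of_forall_seminorm_le {E Y : Type*} [NormedAddCommGroup E]
    [NormedSpace ℝ E] [NormedAddCommGroup Y] [NormedSpace ℝ Y] {p : Seminorm ℝ E} {g : E → Y}
    {x : E} {r c : ℝ} (hr : 0 < r) (hc : 0 ≤ c)
    (hg : ∀ w, p w ≤ r → ‖g (x + w) - g x‖ ≤ c * p w) (w : E) :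
    ‖fderiv ℝ g x w‖ ≤ c * p w := by
  by_cases hd : DifferentiableAt ℝ g x
  · have h_near : ∀ᶠ s : ℝ in nhds 0, p (s • w) < r := by
      have h_cont : Continuous fun s : ℝ ↦ p (s • w) := by
        simp only [map_smul_eq_mul]
        fun_prop
      exact h_cont.tendsto' 0 0 (by simp) |>.eventually_lt_const hr
    have h_line : HasDerivAt (fun s : ℝ ↦ g (x + s • w)) (fderiv ℝ g x w) 0 :=
      hd.hasFDerivAt.hasLineDerivAt w
    refine h_line.le_of_lip' (by positivity) ?_
    filter_upwards [h_near] with s hs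
    have h := hg (s • w) hs.le
    rw [map_smul_eq_mul] at h
    simp only [zero_smul, add_zero, sub_zero]
    linarith
  · rw [fderiv_zero_of_not_differentiableAt hd, zero_apply, norm_zero]
    positivity

variable {n : ℕ} {Y : Type*} [NormedAddCommGroup Y] [NormedSpace ℝ Y]

lemma taylor1_eq_add_fderiv (g : EuclideanSpace ℝ (Fin n) → Y) (x y : EuclideanSpace ℝ (Fin n)) :
    taylor1 g x y = g x + fderiv ℝ g x (y - x) := by
  rw [taylor1]
  conv_rhs => rw [← (EuclideanSpace.basisFun (Fin n) ℝ).sum_repr (y - x)]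
  simp only [map_sum, map_smul, EuclideanSpace.basisFun_repr, EuclideanSpace.basisFun_apply]

lemma taylor1_sub_taylor1 (g : EuclideanSpace ℝ (Fin n) → Y) (x u v : EuclideanSpace ℝ (Fin n)) :
    taylor1 g x u - taylor1 g x v = fderiv ℝ g x (u - v) := by
  rw [taylor1_eq_add_fderiv, taylor1_eq_add_fderiv, add_sub_add_left_eq_sub, ← map_sub,
    sub_sub_sub_cancel_right]

end TaylorPolynomial

theorem statement15_general {n : ℕ} (p : Seminorm ℝ (EuclideanSpace ℝ (Fin n))) {Y : Type*}
    [NormedAddCommGroup Y] [NormedSpace ℝ Y] [CompleteSpace Y] {L : ℝ} (hL : 1 ≤ L)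
    {f : EuclideanSpace ℝ (Fin n) → Y}
    (hf_ball : ∀ x, p x ≤ 1 → ∀ y, p y ≤ 1 → ‖f x - f y‖ ≤ p (x - y))
    (hf : ∀ x y, ‖f x - f y‖ ≤ L * p (x - y)) {x : EuclideanSpace ℝ (Fin n)} (hx : p x < 1)
    {t : ℝ} (ht : 0 < t)
    (ht_le : t * (100 * (MX p * √n + bX p * √(Real.log L)) ^ 2) ≤ (1 - p x) ^ 2)
    (u v : EuclideanSpace ℝ (Fin n)) :
    ‖taylor1 (heat t f) x u - taylor1 (heat t f) x v‖ ≤ 2 * p (u - v) := by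
  set D := MX p * √n + bX p * √(Real.log L)
  have hp := seminorm_continuous p
  have hr₀ : 0 < (1 - p x) / 2 := by linarith
  have hr : 5 * (√t * D) ≤ (1 - p x) / 2 := by
    have h_sq : (10 * (√t * D)) ^ 2 ≤ (1 - p x) ^ 2 := by
      rw [mul_pow, mul_pow, Real.sq_sqrt ht.le]
      linarith
    linarith [le_of_sq_le_sq h_sq (by linarith)]
  have h_tail := mul_heatMeasure_real_seminorm_ge_le_one p ht hL hr₀ hr
  rw [taylor1_sub_taylor1]
  refine norm_fderiv_apply_le_of_forall_seminorm_le hr₀ zero_le_two (fun w hw ↦ ?_) _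
  rw [heat_eq_integral_heatMeasure ht, heat_eq_integral_heatMeasure ht]
  exact norm_integral_comp_sub_left_sub_le hp (integrable_seminorm hp) hf_ball hf (by linarith) hw
    h_tail

/-- **Lemma (Lipschitz constant of the Taylor polynomial of heat evolutes).** -/
theorem statement15 :
    ∃ C : ℝ, 0 < C ∧
      ∀ (n : ℕ), 0 < n →
      ∀ (N : EuclideanSpace ℝ (Fin n) → ℝ), IsNorm N →
      ∀ (Y : Type u) [NormedAddCommGroup Y] [NormedSpace ℝ Y] [CompleteSpace Y],
      ∀ L : ℝ, 1 ≤ L →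
      ∀ f : EuclideanSpace ℝ (Fin n) → Y,
        (∀ x, N x ≤ 1 → ∀ y, N y ≤ 1 → ‖f x - f y‖ ≤ N (x - y)) →
        (∀ x y, ‖f x - f y‖ ≤ L * N (x - y)) →
        ∀ x : EuclideanSpace ℝ (Fin n), N x ≤ 1 →
        ∀ t : ℝ, 0 < t →
          t ≤ (1 - N x) ^ 2 /
              (C * (MX N * Real.sqrt n + bX N * Real.sqrt (Real.log L)) ^ 2) →
          ∀ u v : EuclideanSpace ℝ (Fin n),
            ‖taylor1 (heat t f) x u - taylor1 (heat t f) x v‖ ≤ 2 * N (u - v) := by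
  refine ⟨100, by norm_num, fun n _ N hN Y _ _ _ L hL f hf_ball hf x hx t ht ht_le ↦ ?_⟩
  have hx_lt : N x < 1 := hx.lt_of_ne fun h ↦ by norm_num [h] at ht_le; linarith
  exact statement15_general hN.seminorm hL hf_ball hf hx_lt ht
    (mul_le_of_le_div₀ (sq_nonneg _) (by positivity) ht_le)
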